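/- Let H be a real Hilbert space and let f, g : H → ℝ ∪ {+∞} satisfy Assumptions A1–A2 (f, g proper, lower semicontinuous, convex, dom g ⊆ dom f, f Fréchet differentiable on an open set containing dom g, ∇f uniformly continuous on bounded subsets of dom g and mapping bounded subsets of dom g to bounded sets). Let (x^k) and (α_k) be generated by the forward-backward method with Linesearch 1: x⁰ ∈ dom g, σ > 0, θ ∈ (0,1), δ ∈ (0,1/2), α_k the largest α ∈ {σ, σθ, σθ², …} with α‖∇f(J(x^k,α)) − ∇f(x^k)‖ ≤ δ‖J(x^k,α) − x^k‖, and x^{k+1} = J(x^k, α_k). If the set S* of minimizers of f+g is nonempty, then (x^k) converges weakly to a point of S* and lim_{k→∞} (f+g)(x^k) = min_{x∈H} (f+g)(x). -/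

import Mathlib

/-!
The Fejér inequality
`2 αₖ (F xₖ₊₁ - F y) + (1 - 2δ) ‖xₖ - xₖ₊₁‖² ≤ ‖xₖ - y‖² - ‖xₖ₊₁ - y‖²`, where `F = f + g`, is the
sum of the subgradient inequalities for `f` at `xₖ` and `xₖ₊₁` and the variational inequality of the
proximal point. Taking `y = s ∈ S⁎`, the distances `‖xₖ - s‖` decrease, `‖xₖ - xₖ₊₁‖ → 0`, and
`F xₖ₊₁ - F s ≤ ‖x₀ - s‖ ‖xₖ - xₖ₊₁‖ / αₖ`.

The stepsizes may tend to `0`, but the quotient `‖xₖ - xₖ₊₁‖ / αₖ` still does: if `αₖ ≠ σ`, then the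
trial point `qₖ` of stepsize `αₖ / θ` was rejected, which together with the monotonicity of the
proximal residual in the stepsize bounds the quotient by `‖∇f qₖ - ∇f xₖ‖ / (θδ)`, and
`‖qₖ - xₖ‖ ≤ ‖xₖ - xₖ₊₁‖ / θ → 0`. Hence `F xₖ → min F`; weak cluster points are minimizers, and
Opial's lemma gives weak convergence.
-/

open Set Filter Topology Bornology RealInnerProductSpace

noncomputable section

variable {H : Type*} [NormedAddCommGroup H] [InnerProductSpace ℝ H] [CompleteSpace H]

/-- The effective domain of an extended-real-valued function. -/
def edom (h : H → EReal) : Set H := {x | h x < ⊤}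

/-- `h` is a proper, lower semicontinuous, convex extended-real-valued function. -/
def ProperLscConvex (h : H → EReal) : Prop :=
  (∃ x, h x < ⊤) ∧ (∀ x, ⊥ < h x) ∧ LowerSemicontinuous h ∧
    ∀ x y : H, ∀ a b : ℝ, 0 ≤ a → 0 ≤ b → a + b = 1 →
      h (a • x + b • y) ≤ (a : EReal) * h x + (b : EReal) * h y

/-- `p` is the proximal point `prox_{αg}(z)`, i.e. a minimizer of
`y ↦ g(y) + (1/(2α))‖y - z‖²` (such a minimizer is automatically unique). -/
def IsProxPt (g : H → EReal) (α : ℝ) (z p : H) : Prop :=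
  ∀ y : H, g p + (((1 / (2 * α)) * ‖p - z‖ ^ 2 : ℝ) : EReal)
    ≤ g y + (((1 / (2 * α)) * ‖y - z‖ ^ 2 : ℝ) : EReal)

/-- `f` is Fréchet differentiable, with gradient `f'`, on an open set containing `s`
(in particular `f` is finite there). -/
def GradOnOpenSupset (f : H → EReal) (f' : H → H) (s : Set H) : Prop :=
  ∃ U : Set H, IsOpen U ∧ s ⊆ U ∧
    ∀ x ∈ U, f x ≠ ⊤ ∧ HasGradientAt (fun y => (f y).toReal) (f' x) x

/-- Second half of Assumption A2: `f'` is uniformly continuous on bounded subsets of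
`dom g` and maps bounded subsets of `dom g` to bounded sets. -/
def UCBddOnBounded (g : H → EReal) (f' : H → H) : Prop :=
  ∀ A : Set H, A ⊆ edom g → IsBounded A →
    UniformContinuousOn f' A ∧ IsBounded (f' '' A)

/-- The Linesearch-1 acceptance inequality at the point `x` with stepsize `α`. -/
def LS1 (f' : H → H) (J : H → ℝ → H) (δ : ℝ) (x : H) (α : ℝ) : Prop :=
  α * ‖f' (J x α) - f' x‖ ≤ δ * ‖J x α - x‖

/-- `α` is the output of Linesearch 1 at `x`: the largest element of
`{σ, σθ, σθ², …}` satisfying the acceptance inequality. -/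
def LS1Step (f' : H → H) (J : H → ℝ → H) (δ σ θ : ℝ) (x : H) (α : ℝ) : Prop :=
  ∃ n : ℕ, α = σ * θ ^ n ∧ LS1 f' J δ x α ∧
    ∀ m : ℕ, m < n → ¬ LS1 f' J δ x (σ * θ ^ m)

/-- The set of minimizers `S⁎` of `f + g` over `H`. -/
def argminSet (f g : H → EReal) : Set H := {x | ∀ y, f x + g x ≤ f y + g y}

/-- The Linesearch-2 acceptance inequality at `x` (with `Jx = prox_g(x - ∇f(x))`)
with stepsize `β`. -/
def LS2Ineq (f g : H → EReal) (f' : H → H) (x Jx : H) (β : ℝ) : Prop :=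
  f (x - β • (x - Jx)) + g (x - β • (x - Jx)) ≤
    f x + g x - (β : EReal) * (g x - g Jx)
      - ((β * ⟪f' x, x - Jx⟫ : ℝ) : EReal) + (((β / 2) * ‖x - Jx‖ ^ 2 : ℝ) : EReal)

/-- `v` belongs to the convex subdifferential `∂h(y)`. -/
def InSubdiff (h : H → EReal) (y v : H) : Prop :=
  ∀ z : H, ((⟪v, z - y⟫ : ℝ) : EReal) ≤ h z - h y

/-- `h` is strongly convex with modulus `μ`. -/
def StrongConvexWith (h : H → EReal) (μ : ℝ) : Prop :=
  ∀ x y v : H, InSubdiff h y v →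
    h y + ((⟪v, x - y⟫ : ℝ) : EReal) + (((μ / 2) * ‖x - y‖ ^ 2 : ℝ) : EReal) ≤ h x

variable {ι X E : Type*} [NormedAddCommGroup X] [NormedSpace ℝ X]
  [NormedAddCommGroup E] [InnerProductSpace ℝ E]

theorem le_of_lowerSemicontinuousAt_of_tendsto {T β : Type*} [TopologicalSpace T] [LinearOrder β]
    [DenselyOrdered β] [TopologicalSpace β] [OrderClosedTopology β] {l : Filter ι} [NeBot l]
    {g : T → β} {u : ι → T} {b : ι → β} {p : T} {B : β} (hg : LowerSemicontinuousAt g p)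
    (hu : Tendsto u l (𝓝 p)) (hb : Tendsto b l (𝓝 B)) (hle : ∀ k, g (u k) ≤ b k) : g p ≤ B :=
  le_of_forall_lt_imp_le_of_dense fun c hc =>
    ge_of_tendsto hb ((hu.eventually (hg c hc)).mono fun k hk => hk.le.trans (hle k))

theorem isCompact_toWeakSpace_image_closedBall (r : ℝ) :
    IsCompact (toWeakSpace ℝ H '' Metric.closedBall 0 r) := by
  let J := InnerProductSpace.toDual ℝ H
  let e : WeakDual ℝ H → WeakSpace ℝ H := fun ξ =>
    toWeakSpace ℝ H (J.symm (WeakDual.toStrongDual ξ))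
  have he : Continuous e := by
    refine WeakBilin.continuous_of_continuous_eval (topDualPairing ℝ H).flip fun φ => ?_
    refine (WeakDual.eval_continuous (J.symm φ)).congr fun ξ => ?_
    calc ξ (J.symm φ) = ⟪J.symm (WeakDual.toStrongDual ξ), J.symm φ⟫ :=
          InnerProductSpace.toDual_symm_apply.symm
      _ = φ (J.symm (WeakDual.toStrongDual ξ)) := by
          rw [real_inner_comm, InnerProductSpace.toDual_symm_apply]
  have himage : toWeakSpace ℝ H '' Metric.closedBall 0 r =
      e '' (WeakDual.toStrongDual ⁻¹' Metric.closedBall 0 r) := by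
    ext w
    constructor
    · rintro ⟨x, hx, rfl⟩
      exact ⟨StrongDual.toWeakDual (J x), by simpa using hx, by simp [e]⟩
    · rintro ⟨ξ, hξ, rfl⟩
      exact ⟨J.symm (WeakDual.toStrongDual ξ), by simpa using hξ, rfl⟩
  rw [himage]
  exact (WeakDual.isCompact_closedBall 0 r).image he

theorem continuous_inner_toWeakSpace_symm (y : E) :
    Continuous fun w : WeakSpace ℝ E => ⟪(toWeakSpace ℝ E).symm w, y⟫ := by
  simp only [real_inner_comm y]
  exact WeakBilin.eval_continuous (topDualPairing ℝ E).flip (innerSL ℝ y)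

theorem exists_tendsto_inner_sub {l : Filter ι} {x : ι → E} {p q : E} {r t : ℝ}
    (hp : Tendsto (fun k => ‖x k - p‖) l (𝓝 r)) (hq : Tendsto (fun k => ‖x k - q‖) l (𝓝 t)) :
    ∃ L, Tendsto (fun k => ⟪x k, p - q⟫) l (𝓝 L) := by
  refine ⟨_, (((hq.pow 2).sub (hp.pow 2)).add_const (‖p‖ ^ 2 - ‖q‖ ^ 2)).div_const 2 |>.congr
    fun k => ?_⟩
  rw [norm_sub_sq_real, norm_sub_sq_real, inner_sub_right]
  ring

theorem exists_tendsto_toWeakSpace_of_opial {l : Filter ι} [NeBot l] {x : ι → H} {S : Set H}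
    (hS : S.Nonempty) (hnorm : ∀ s ∈ S, ∃ r, Tendsto (fun k => ‖x k - s‖) l (𝓝 r))
    (hclus : ∀ p, MapClusterPt (toWeakSpace ℝ H p) l (fun k => toWeakSpace ℝ H (x k)) → p ∈ S) :
    ∃ p ∈ S, Tendsto (fun k => toWeakSpace ℝ H (x k)) l (𝓝 (toWeakSpace ℝ H p)) := by
  obtain ⟨s, hs⟩ := hS
  obtain ⟨r, hr⟩ := hnorm s hs
  have hmem : ∀ᶠ k in l, toWeakSpace ℝ H (x k) ∈
      toWeakSpace ℝ H '' Metric.closedBall 0 (r + 1 + ‖s‖) := by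
    filter_upwards [hr.eventually_le_const (lt_add_one r)] with k hk
    refine mem_image_of_mem _ (mem_closedBall_zero_iff.2 ?_)
    linarith [norm_le_norm_sub_add (x k) s]
  have hK := isCompact_toWeakSpace_image_closedBall (H := H) (r + 1 + ‖s‖)
  obtain ⟨-, ⟨p, -, rfl⟩, hp⟩ := hK.exists_mapClusterPt_of_frequently hmem.frequently
  refine ⟨p, hclus p hp, hK.tendsto_nhds_of_unique_mapClusterPt hmem ?_⟩
  rintro - ⟨q, -, rfl⟩ hq
  obtain ⟨⟨_, hrp⟩, ⟨_, hrq⟩⟩ := And.intro (hnorm p (hclus p hp)) (hnorm q (hclus q hq))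
  obtain ⟨L, hL⟩ := exists_tendsto_inner_sub hrp hrq
  have hinner : ∀ v, MapClusterPt (toWeakSpace ℝ H v) l (fun k => toWeakSpace ℝ H (x k)) →
      ⟪v, p - q⟫ = L := by
    intro v hv
    obtain ⟨U, hU, hUv⟩ := mapClusterPt_iff_ultrafilter.1 hv
    exact tendsto_nhds_unique
      (((continuous_inner_toWeakSpace_symm (p - q)).tendsto _).comp hUv) (hL.mono_left hU)
  have hzero : ⟪p - q, p - q⟫ = 0 := by
    rw [inner_sub_left, hinner p hp, hinner q hq, sub_self]
  rw [sub_eq_zero.1 (inner_self_eq_zero.1 hzero)]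

theorem lowerSemicontinuous_comp_toWeakSpace_symm {β : Type*} [LinearOrder β] {g : X → β}
    (hg : LowerSemicontinuous g) (hq : QuasiconvexOn ℝ univ g) :
    LowerSemicontinuous fun w : WeakSpace ℝ X => g ((toWeakSpace ℝ X).symm w) := by
  refine lowerSemicontinuous_iff_isClosed_preimage.2 fun r => ?_
  have hconv : Convex ℝ (g ⁻¹' Iic r) := by simpa using! hq r
  have hclosure := hconv.toWeakSpace_closure ℝ
  rw [(hg.isClosed_preimage r).closure_eq, LinearEquiv.image_eq_preimage_symm] at hclosure
  exact closure_eq_iff_isClosed.1 hclosure.symm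

theorem add_fderiv_apply_le_of_convexOn {D : Set X} {φ : X → ℝ} {φ' : X →L[ℝ] ℝ}
    {x y : X} (hφ : ConvexOn ℝ D φ) (hx : x ∈ D) (hy : y ∈ D) (h : HasFDerivAt φ φ' x) :
    φ x + φ' (y - x) ≤ φ y := by
  let c : ℝ →ᵃ[ℝ] X := AffineMap.lineMap x y
  have hderiv : HasDerivAt (φ ∘ c) (φ' (y - x)) 0 := by
    refine HasFDerivAt.comp_hasDerivAt 0 ?_ AffineMap.hasDerivAt_lineMap
    simpa [c] using h
  have hslope := (hφ.comp_affineMap c).le_slope_of_hasDerivAt (x := 0) (y := 1)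
    (by simpa [c] using hx) (by simpa [c] using hy) one_pos hderiv
  simp only [slope_def_field, Function.comp_apply, c, AffineMap.lineMap_apply_one,
    AffineMap.lineMap_apply_zero, sub_zero, div_one] at hslope
  linarith

theorem inner_sub_le_of_isMinOn {D : Set E} {γ : E → ℝ} {α : ℝ} {z p y : E}
    (hγ : ConvexOn ℝ D γ) (hα : 0 < α)
    (hmin : IsMinOn (fun w => γ w + 1 / (2 * α) * ‖w - z‖ ^ 2) D p) (hp : p ∈ D) (hy : y ∈ D) :
    ⟪z - p, y - p⟫ ≤ α * (γ y - γ p) := by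
  have hseg : ∀ t : ℝ, 0 < t → t ≤ 1 →
      ⟪z - p, y - p⟫ ≤ α * (γ y - γ p) + t * (‖y - p‖ ^ 2 / 2) := by
    intro t ht ht1
    have hmem : (1 - t) • p + t • y ∈ D :=
      hγ.1 hp hy (sub_nonneg.2 ht1) ht.le (sub_add_cancel 1 t)
    have hconv : γ ((1 - t) • p + t • y) ≤ (1 - t) * γ p + t * γ y :=
      hγ.2 hp hy (sub_nonneg.2 ht1) ht.le (sub_add_cancel 1 t)
    have hnorm : ‖(1 - t) • p + t • y - z‖ ^ 2 =
        ‖p - z‖ ^ 2 - 2 * (t * ⟪z - p, y - p⟫) + t ^ 2 * ‖y - p‖ ^ 2 := by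
      rw [show (1 - t) • p + t • y - z = (p - z) + t • (y - p) by module, norm_add_sq_real,
        norm_smul, mul_pow, Real.norm_eq_abs, sq_abs, real_inner_smul_right, ← neg_sub z p,
        inner_neg_left, norm_neg]
      ring
    have hle := isMinOn_iff.1 hmin _ hmem
    rw [hnorm] at hle
    have hscaled : t * ⟪z - p, y - p⟫ ≤ t * (α * (γ y - γ p) + t * (‖y - p‖ ^ 2 / 2)) := by
      have := mul_le_mul_of_nonneg_left (hle.trans (add_le_add_left hconv _)) hα.le
      field_simp at this
      linarith
    exact le_of_mul_le_mul_left hscaled ht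
  have hlim : Tendsto (fun t : ℝ => α * (γ y - γ p) + t * (‖y - p‖ ^ 2 / 2)) (𝓝[>] 0)
      (𝓝 (α * (γ y - γ p))) := by
    have : Continuous fun t : ℝ => α * (γ y - γ p) + t * (‖y - p‖ ^ 2 / 2) := by fun_prop
    simpa using (this.tendsto 0).mono_left nhdsWithin_le_nhds
  refine ge_of_tendsto hlim ?_
  filter_upwards [Ioc_mem_nhdsGT (zero_lt_one' ℝ)] with t ht using hseg t ht.1 ht.2

/-- The variational inequality characterising `p = prox_{αγ}(z)` for a real function `γ` that is
convex on its domain `D`; it replaces the minimization in `IsProxPt` by a condition on real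
numbers. -/
def ProxVI (D : Set E) (γ : E → ℝ) (α : ℝ) (z p : E) : Prop :=
  p ∈ D ∧ ∀ y ∈ D, ⟪z - p, y - p⟫ ≤ α * (γ y - γ p)

/-- `f'` selects a subgradient of the restriction of `φ` to `D` at each point of `D`; it plays the
role of the gradient in the forward-backward step. -/
def IsSubgradientOn (D : Set E) (φ : E → ℝ) (f' : E → E) : Prop :=
  ∀ ⦃x⦄, x ∈ D → ∀ ⦃y⦄, y ∈ D → φ x + ⟪f' x, y - x⟫ ≤ φ y

section ForwardBackwardStep

variable {D : Set E} {φ γ : E → ℝ} {f' : E → E} {α β δ : ℝ} {x v p q y : E}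

theorem mul_norm_sub_le_inner_smul_sub (hα : 0 ≤ α) (hβ : 0 ≤ β) (p q : E) :
    (‖p‖ - ‖q‖) * (β * ‖p‖ - α * ‖q‖) ≤ ⟪β • p - α • q, p - q⟫ := by
  have hexpand : ⟪β • p - α • q, p - q⟫ = β * ‖p‖ ^ 2 + α * ‖q‖ ^ 2 - (α + β) * ⟪p, q⟫ := by
    simp only [inner_sub_left, inner_sub_right, real_inner_smul_left, real_inner_self_eq_norm_sq,
      real_inner_comm p q]
    ring
  rw [hexpand]
  linarith [mul_le_mul_of_nonneg_left (real_inner_le_norm p q) (add_nonneg hα hβ)]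

theorem ProxVI.mul_norm_sub_nonpos (hα : 0 ≤ α) (hβ : 0 ≤ β)
    (hp : ProxVI D γ α (x - α • v) p) (hq : ProxVI D γ β (x - β • v) q) :
    (‖x - p‖ - ‖x - q‖) * (β * ‖x - p‖ - α * ‖x - q‖) ≤ 0 := by
  refine (mul_norm_sub_le_inner_smul_sub hα hβ _ _).trans ?_
  have hsplit : ⟪β • (x - p) - α • (x - q), x - p - (x - q)⟫ =
      β * ⟪x - α • v - p, q - p⟫ + α * ⟪x - β • v - q, p - q⟫ := by
    rw [← neg_sub q p, inner_neg_right, mul_neg, ← real_inner_smul_left, ← real_inner_smul_left,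
      ← sub_eq_add_neg, ← inner_sub_left]
    congr 1 <;> module
  rw [hsplit]
  linarith [mul_le_mul_of_nonneg_left (hp.2 q hq.1) hβ, mul_le_mul_of_nonneg_left (hq.2 p hp.1) hα]

theorem ProxVI.norm_sub_le_of_le (hα : 0 < α) (hαβ : α ≤ β)
    (hp : ProxVI D γ α (x - α • v) p) (hq : ProxVI D γ β (x - β • v) q) :
    ‖x - p‖ ≤ ‖x - q‖ := by
  by_contra! hlt
  have hmul : α * ‖x - q‖ < β * ‖x - p‖ :=
    (mul_lt_mul_of_pos_left hlt hα).trans_le (mul_le_mul_of_nonneg_right hαβ (norm_nonneg _))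
  exact (mul_pos (sub_pos.2 hlt) (sub_pos.2 hmul)).not_ge
    (hp.mul_norm_sub_nonpos hα.le (hα.le.trans hαβ) hq)

theorem ProxVI.mul_norm_sub_le_of_le (hα : 0 < α) (hαβ : α ≤ β)
    (hp : ProxVI D γ α (x - α • v) p) (hq : ProxVI D γ β (x - β • v) q) :
    α * ‖x - q‖ ≤ β * ‖x - p‖ := by
  by_contra! hlt
  have hnorm : ‖x - p‖ < ‖x - q‖ := by
    refine lt_of_mul_lt_mul_left (lt_of_le_of_lt ?_ hlt) hα.le
    exact mul_le_mul_of_nonneg_right hαβ (norm_nonneg _)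
  exact (mul_pos_of_neg_of_neg (sub_neg.2 hnorm) (sub_neg.2 hlt)).not_ge
    (hp.mul_norm_sub_nonpos hα.le (hα.le.trans hαβ) hq)

theorem IsSubgradientOn.mul_sub_le (hsub : IsSubgradientOn D φ f') (hα : 0 ≤ α) (hx : x ∈ D)
    (hp : p ∈ D) (hy : y ∈ D) (hacc : α * ‖f' p - f' x‖ ≤ δ * ‖p - x‖) :
    α * (φ p - φ y) ≤ α * ⟪f' x, p - y⟫ + δ * ‖x - p‖ ^ 2 := by
  have hgrad : α * ⟪f' p - f' x, p - x⟫ ≤ δ * ‖x - p‖ ^ 2 :=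
    calc α * ⟪f' p - f' x, p - x⟫ ≤ α * (‖f' p - f' x‖ * ‖p - x‖) :=
          mul_le_mul_of_nonneg_left (real_inner_le_norm _ _) hα
      _ = α * ‖f' p - f' x‖ * ‖p - x‖ := (mul_assoc _ _ _).symm
      _ ≤ δ * ‖p - x‖ * ‖p - x‖ := mul_le_mul_of_nonneg_right hacc (norm_nonneg _)
      _ = δ * ‖x - p‖ ^ 2 := by rw [norm_sub_rev]; ring
  have hsplit : ⟪f' p - f' x, p - x⟫ = -⟪f' p, x - p⟫ - ⟪f' x, p - y⟫ - ⟪f' x, y - x⟫ := by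
    simp only [inner_sub_left, inner_sub_right]
    ring
  rw [hsplit] at hgrad
  linarith [mul_le_mul_of_nonneg_left (hsub hx hy) hα, mul_le_mul_of_nonneg_left (hsub hp hx) hα]

theorem ProxVI.fejer (hsub : IsSubgradientOn D φ f') (hα : 0 ≤ α) (hx : x ∈ D) (hy : y ∈ D)
    (hp : ProxVI D γ α (x - α • f' x) p) (hacc : α * ‖f' p - f' x‖ ≤ δ * ‖p - x‖) :
    2 * (α * (φ p + γ p - (φ y + γ y))) + (1 - 2 * δ) * ‖x - p‖ ^ 2 ≤
      ‖x - y‖ ^ 2 - ‖p - y‖ ^ 2 := by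
  have hforward := hsub.mul_sub_le hα hx hp.1 hy hacc
  have hbackward : ⟪x - p, y - p⟫ + α * ⟪f' x, p - y⟫ ≤ α * (γ y - γ p) := by
    refine le_of_eq_of_le ?_ (hp.2 y hy)
    rw [sub_right_comm, inner_sub_left (x - p), real_inner_smul_left, ← neg_sub y p,
      inner_neg_right]
    ring
  have hpolar : ‖x - y‖ ^ 2 = ‖x - p‖ ^ 2 - 2 * ⟪x - p, y - p⟫ + ‖p - y‖ ^ 2 := by
    rw [← sub_sub_sub_cancel_right x y p, norm_sub_sq_real, norm_sub_rev y p]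
  linarith

end ForwardBackwardStep

theorem tendsto_dist_comp_of_uniformContinuousOn_bounded {M N : Type*} [PseudoMetricSpace M]
    [PseudoMetricSpace N] {D : Set M} {T : M → N}
    (hT : ∀ A ⊆ D, IsBounded A → UniformContinuousOn T A) {u v : ℕ → M} (hu : ∀ k, u k ∈ D)
    (hv : ∀ k, v k ∈ D) (hbdd : IsBounded (range v))
    (hdist : Tendsto (fun k => dist (u k) (v k)) atTop (𝓝 0)) :
    Tendsto (fun k => dist (T (u k)) (T (v k))) atTop (𝓝 0) := by
  obtain ⟨r, hr⟩ := hdist.bddAbove_range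
  have hbdd' : IsBounded (range u) := by
    refine (hbdd.cthickening (δ := r)).subset (range_subset_iff.2 fun k => ?_)
    exact Metric.mem_cthickening_of_dist_le _ _ _ _ (mem_range_self k) (hr (mem_range_self k))
  have hUC := hT (range u ∪ range v)
    (union_subset (range_subset_iff.2 hu) (range_subset_iff.2 hv)) (hbdd'.union hbdd)
  have hpair : Tendsto (fun k => (u k, v k)) atTop
      (uniformity M ⊓ 𝓟 ((range u ∪ range v) ×ˢ (range u ∪ range v))) :=
    tendsto_inf.2 ⟨tendsto_uniformity_iff_dist_tendsto_zero.2 hdist,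
      tendsto_principal.2 (.of_forall fun k => ⟨.inl (mem_range_self k), .inr (mem_range_self k)⟩)⟩
  exact tendsto_uniformity_iff_dist_tendsto_zero.1 (Tendsto.comp hUC hpair)

/-- A run of the forward-backward method with Linesearch 1 for `φ + γ` on `D`: iterates `x`,
stepsizes `a`, and the points `q k` obtained from `x k` with the stepsize `a k / θ`, which the
linesearch tried and rejected unless `a k = σ`. -/
structure IsFBRun (D : Set E) (γ : E → ℝ) (f' : E → E) (σ θ δ : ℝ) (x q : ℕ → E) (a : ℕ → ℝ) :
    Prop where
  mem : ∀ k, x k ∈ D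
  stepsize_pos : ∀ k, 0 < a k
  step : ∀ k, ProxVI D γ (a k) (x k - a k • f' (x k)) (x (k + 1))
  accepted : ∀ k, a k * ‖f' (x (k + 1)) - f' (x k)‖ ≤ δ * ‖x (k + 1) - x k‖
  trial : ∀ k, ProxVI D γ (a k / θ) (x k - (a k / θ) • f' (x k)) (q k)
  rejected : ∀ k, a k = σ ∨ δ * ‖q k - x k‖ < a k / θ * ‖f' (q k) - f' (x k)‖

namespace IsFBRun

variable {D : Set E} {φ γ : E → ℝ} {f' : E → E} {σ θ δ : ℝ} {x q : ℕ → E} {a : ℕ → ℝ} {s : E}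

theorem fejer (h : IsFBRun D γ f' σ θ δ x q a) (hsub : IsSubgradientOn D φ f') (hs : s ∈ D)
    (k : ℕ) :
    2 * (a k * (φ (x (k + 1)) + γ (x (k + 1)) - (φ s + γ s))) +
      (1 - 2 * δ) * ‖x k - x (k + 1)‖ ^ 2 ≤ ‖x k - s‖ ^ 2 - ‖x (k + 1) - s‖ ^ 2 :=
  (h.step k).fejer hsub (h.stepsize_pos k).le (h.mem k) hs (h.accepted k)

theorem mul_sq_norm_step_le (h : IsFBRun D γ f' σ θ δ x q a) (hsub : IsSubgradientOn D φ f')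
    (hs : s ∈ D) (hmin : IsMinOn (fun y => φ y + γ y) D s) (k : ℕ) :
    (1 - 2 * δ) * ‖x k - x (k + 1)‖ ^ 2 ≤ ‖x k - s‖ ^ 2 - ‖x (k + 1) - s‖ ^ 2 := by
  have hgap := mul_nonneg (h.stepsize_pos k).le
    (sub_nonneg.2 (isMinOn_iff.1 hmin _ (h.mem (k + 1))))
  linarith [h.fejer hsub hs k]

theorem antitone_norm_sub (h : IsFBRun D γ f' σ θ δ x q a) (hsub : IsSubgradientOn D φ f')
    (hδ : δ ≤ 1 / 2) (hs : s ∈ D) (hmin : IsMinOn (fun y => φ y + γ y) D s) :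
    Antitone fun k => ‖x k - s‖ := by
  refine antitone_nat_of_succ_le fun k => (sq_le_sq₀ (norm_nonneg _) (norm_nonneg _)).1 ?_
  have hstep : 0 ≤ (1 - 2 * δ) * ‖x k - x (k + 1)‖ ^ 2 :=
    mul_nonneg (by linarith) (sq_nonneg _)
  linarith [h.mul_sq_norm_step_le hsub hs hmin k]

theorem exists_tendsto_norm_sub (h : IsFBRun D γ f' σ θ δ x q a)
    (hsub : IsSubgradientOn D φ f') (hδ : δ ≤ 1 / 2) (hs : s ∈ D)
    (hmin : IsMinOn (fun y => φ y + γ y) D s) :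
    ∃ r, Tendsto (fun k => ‖x k - s‖) atTop (𝓝 r) :=
  ⟨_, tendsto_atTop_ciInf (h.antitone_norm_sub hsub hδ hs hmin)
    ⟨0, forall_mem_range.2 fun _ => norm_nonneg _⟩⟩

theorem tendsto_norm_step (h : IsFBRun D γ f' σ θ δ x q a) (hsub : IsSubgradientOn D φ f')
    (hδ : δ < 1 / 2) (hs : s ∈ D) (hmin : IsMinOn (fun y => φ y + γ y) D s) :
    Tendsto (fun k => ‖x k - x (k + 1)‖) atTop (𝓝 0) := by
  have hδ' : 0 < 1 - 2 * δ := by linarith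
  obtain ⟨r, hr⟩ := h.exists_tendsto_norm_sub hsub hδ.le hs hmin
  have hbound : Tendsto (fun k => √((‖x k - s‖ ^ 2 - ‖x (k + 1) - s‖ ^ 2) / (1 - 2 * δ))) atTop
      (𝓝 0) := by
    simpa using (((hr.pow 2).sub (((tendsto_add_atTop_iff_nat 1).2 hr).pow 2)).div_const
      (1 - 2 * δ)).sqrt
  refine squeeze_zero (fun _ => norm_nonneg _) (fun k => Real.le_sqrt_of_sq_le ?_) hbound
  rw [le_div_iff₀' hδ']
  exact h.mul_sq_norm_step_le hsub hs hmin k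

theorem isBounded_range (h : IsFBRun D γ f' σ θ δ x q a) (hsub : IsSubgradientOn D φ f')
    (hδ : δ ≤ 1 / 2) (hs : s ∈ D) (hmin : IsMinOn (fun y => φ y + γ y) D s) :
    IsBounded (range x) := by
  refine (Metric.isBounded_closedBall (x := s) (r := ‖x 0 - s‖)).subset ?_
  rintro - ⟨k, rfl⟩
  exact mem_closedBall_iff_norm.2 (h.antitone_norm_sub hsub hδ hs hmin k.zero_le)

theorem stepsize_le_div (h : IsFBRun D γ f' σ θ δ x q a) (hθ : θ ∈ Ioo (0 : ℝ) 1) (k : ℕ) :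
    a k ≤ a k / θ :=
  le_div_self (h.stepsize_pos k).le hθ.1 hθ.2.le

theorem norm_sub_trial_le (h : IsFBRun D γ f' σ θ δ x q a) (hθ : θ ∈ Ioo (0 : ℝ) 1) (k : ℕ) :
    ‖x k - q k‖ ≤ ‖x k - x (k + 1)‖ / θ := by
  have hmono := (h.step k).mul_norm_sub_le_of_le (h.stepsize_pos k) (h.stepsize_le_div hθ k)
    (h.trial k)
  rw [div_mul_eq_mul_div, mul_div_assoc] at hmono
  exact le_of_mul_le_mul_left hmono (h.stepsize_pos k)

theorem norm_step_div_le (h : IsFBRun D γ f' σ θ δ x q a) (hσ : 0 < σ) (hθ : θ ∈ Ioo (0 : ℝ) 1)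
    (hδ : 0 < δ) (k : ℕ) :
    ‖x k - x (k + 1)‖ / a k ≤
      ‖x k - x (k + 1)‖ / σ + ‖f' (q k) - f' (x k)‖ / (θ * δ) := by
  have hθ0 := hθ.1
  have ha := h.stepsize_pos k
  rcases h.rejected k with hfull | hrej
  · rw [hfull]
    exact le_add_of_nonneg_right (by positivity)
  · have hmono : ‖x k - x (k + 1)‖ ≤ ‖q k - x k‖ := by
      rw [norm_sub_rev (q k)]
      exact (h.step k).norm_sub_le_of_le ha (h.stepsize_le_div hθ k) (h.trial k)
    refine le_add_of_nonneg_of_le (by positivity) ?_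
    rw [div_le_div_iff₀ ha (by positivity)]
    have hscaled := (mul_le_mul_of_nonneg_left hmono hδ.le).trans hrej.le
    rw [div_mul_eq_mul_div, le_div_iff₀ hθ0] at hscaled
    linarith

theorem tendsto_norm_step_div (h : IsFBRun D γ f' σ θ δ x q a) (hsub : IsSubgradientOn D φ f')
    (hUC : ∀ A ⊆ D, IsBounded A → UniformContinuousOn f' A) (hσ : 0 < σ)
    (hθ : θ ∈ Ioo (0 : ℝ) 1) (hδ : δ ∈ Ioo (0 : ℝ) (1 / 2)) (hs : s ∈ D)
    (hmin : IsMinOn (fun y => φ y + γ y) D s) :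
    Tendsto (fun k => ‖x k - x (k + 1)‖ / a k) atTop (𝓝 0) := by
  have hstep := h.tendsto_norm_step hsub hδ.2 hs hmin
  have htrial : Tendsto (fun k => dist (q k) (x k)) atTop (𝓝 0) := by
    refine squeeze_zero (fun _ => dist_nonneg) (fun k => ?_) (by simpa using hstep.div_const θ)
    rw [dist_comm, dist_eq_norm]
    exact h.norm_sub_trial_le hθ k
  have hgrad := tendsto_dist_comp_of_uniformContinuousOn_bounded hUC (fun k => (h.trial k).1)
    h.mem (h.isBounded_range hsub hδ.2.le hs hmin) htrial
  simp only [dist_eq_norm] at hgrad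
  refine squeeze_zero (fun k => div_nonneg (norm_nonneg _) (h.stepsize_pos k).le)
    (h.norm_step_div_le hσ hθ hδ.1) ?_
  simpa using (hstep.div_const σ).add (hgrad.div_const (θ * δ))

theorem value_sub_le (h : IsFBRun D γ f' σ θ δ x q a) (hsub : IsSubgradientOn D φ f')
    (hδ : δ ≤ 1 / 2) (hs : s ∈ D) (hmin : IsMinOn (fun y => φ y + γ y) D s) (k : ℕ) :
    φ (x (k + 1)) + γ (x (k + 1)) - (φ s + γ s) ≤
      ‖x 0 - s‖ * (‖x k - x (k + 1)‖ / a k) := by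
  have hanti := h.antitone_norm_sub hsub hδ hs hmin
  have hstep : 0 ≤ (1 - 2 * δ) * ‖x k - x (k + 1)‖ ^ 2 :=
    mul_nonneg (by linarith) (sq_nonneg _)
  have hsq : ‖x k - s‖ ^ 2 - ‖x (k + 1) - s‖ ^ 2 ≤ 2 * ‖x 0 - s‖ * ‖x k - x (k + 1)‖ := by
    rw [sq_sub_sq]
    refine mul_le_mul ?_ ?_ (sub_nonneg.2 (hanti k.le_succ)) (by positivity)
    · linarith [hanti k.zero_le, hanti (k + 1).zero_le]
    · simpa using norm_sub_norm_le (x k - s) (x (k + 1) - s)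
  rw [← mul_div_assoc, le_div_iff₀' (h.stepsize_pos k)]
  linarith [h.fejer hsub hs k]

theorem tendsto_value (h : IsFBRun D γ f' σ θ δ x q a) (hsub : IsSubgradientOn D φ f')
    (hUC : ∀ A ⊆ D, IsBounded A → UniformContinuousOn f' A) (hσ : 0 < σ)
    (hθ : θ ∈ Ioo (0 : ℝ) 1) (hδ : δ ∈ Ioo (0 : ℝ) (1 / 2)) (hs : s ∈ D)
    (hmin : IsMinOn (fun y => φ y + γ y) D s) :
    Tendsto (fun k => φ (x k) + γ (x k)) atTop (𝓝 (φ s + γ s)) := by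
  have hgap : Tendsto (fun k => φ (x (k + 1)) + γ (x (k + 1)) - (φ s + γ s)) atTop (𝓝 0) :=
    squeeze_zero (fun k => sub_nonneg.2 (isMinOn_iff.1 hmin _ (h.mem _)))
      (h.value_sub_le hsub hδ.2.le hs hmin)
      (by simpa using (h.tendsto_norm_step_div hsub hUC hσ hθ hδ hs hmin).const_mul ‖x 0 - s‖)
  refine (tendsto_add_atTop_iff_nat 1).1 ?_
  simpa using hgap.add_const (φ s + γ s)

end IsFBRun

section ExtendedReal

variable {T Y : Type*} [NormedAddCommGroup Y] {g h : E → EReal} {α δ σ θ : ℝ} {x z p : E}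

theorem ProperLscConvex.quasiconvexOn (hh : ProperLscConvex h) : QuasiconvexOn ℝ univ h := by
  refine quasiconvexOn_iff_le_max.2 ⟨convex_univ, fun x _ y _ a b ha hb hab => ?_⟩
  have ha' : (0 : EReal) ≤ a := EReal.coe_nonneg.2 ha
  have hb' : (0 : EReal) ≤ b := EReal.coe_nonneg.2 hb
  calc h (a • x + b • y) ≤ a * h x + b * h y := hh.2.2.2 x y a b ha hb hab
    _ ≤ a * (h x ⊔ h y) + b * (h x ⊔ h y) := by gcongr <;> simp
    _ = h x ⊔ h y := by
        rw [← EReal.right_distrib_of_nonneg ha' hb', ← EReal.coe_add, hab, EReal.coe_one, one_mul]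

theorem ProperLscConvex.convex_edom (hh : ProperLscConvex h) : Convex ℝ (edom h) := by
  simpa [edom] using hh.quasiconvexOn.convex_lt ⊤

theorem ProperLscConvex.coe_toReal (hh : ProperLscConvex h) (hx : x ∈ edom h) :
    ((h x).toReal : EReal) = h x :=
  EReal.coe_toReal (ne_of_lt hx) (hh.2.1 x).ne'

theorem ProperLscConvex.convexOn_toReal {D : Set E} (hh : ProperLscConvex h) (hD : Convex ℝ D)
    (hsub : D ⊆ edom h) : ConvexOn ℝ D (fun y => (h y).toReal) := by
  refine ⟨hD, fun x hx y hy a b ha hb hab => EReal.coe_le_coe_iff.1 ?_⟩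
  have hconv := hh.2.2.2 x y a b ha hb hab
  rw [← hh.coe_toReal (hsub hx), ← hh.coe_toReal (hsub hy),
    ← hh.coe_toReal (hsub (hD hx hy ha hb hab))] at hconv
  exact_mod_cast hconv

theorem IsProxPt.mem_edom (hg : ProperLscConvex g) (hp : IsProxPt g α z p) : p ∈ edom g := by
  obtain ⟨y, hy⟩ := hg.1
  by_contra hnot
  have htop : g p = ⊤ := not_lt_top_iff.1 hnot
  have hle := hp y
  rw [htop, EReal.top_add_coe] at hle
  exact (EReal.add_lt_top hy.ne (EReal.coe_ne_top _)).not_ge hle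

theorem IsProxPt.proxVI (hg : ProperLscConvex g) (hα : 0 < α) (hp : IsProxPt g α z p) :
    ProxVI (edom g) (fun y => (g y).toReal) α z p := by
  have hmem := hp.mem_edom hg
  refine ⟨hmem, fun y hy => inner_sub_le_of_isMinOn
    (hg.convexOn_toReal hg.convex_edom subset_rfl) hα (fun w hw => ?_) hmem hy⟩
  have hle := hp w
  rw [← hg.coe_toReal hmem, ← hg.coe_toReal hw] at hle
  exact_mod_cast hle

theorem GradOnOpenSupset.isSubgradientOn {f : H → EReal} {f' : H → H} {D : Set H}
    (hf : ProperLscConvex f) (hD : Convex ℝ D) (hsub : D ⊆ edom f)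
    (hdiff : GradOnOpenSupset f f' D) :
    IsSubgradientOn D (fun y => (f y).toReal) f' := by
  obtain ⟨U, -, hDU, hU⟩ := hdiff
  intro x hx y hy
  simpa only [InnerProductSpace.toDual_apply_apply] using
    add_fderiv_apply_le_of_convexOn (hf.convexOn_toReal hD hsub) hx hy (hU x (hDU hx)).2.hasFDerivAt

theorem coe_toReal_add_toReal {f g : T → EReal} {x : T} (hf : ∀ y, ⊥ < f y) (hg : ∀ y, ⊥ < g y)
    (hdom : edom g ⊆ edom f) (hx : x ∈ edom g) :
    (((f x).toReal + (g x).toReal : ℝ) : EReal) = f x + g x := by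
  rw [EReal.coe_add, EReal.coe_toReal (ne_of_lt (hdom hx)) (hf x).ne',
    EReal.coe_toReal (ne_of_lt hx) (hg x).ne']

theorem mem_argminSet_iff {f g : T → EReal} {s : T} (hf : ∀ y, ⊥ < f y) (hg : ∀ y, ⊥ < g y)
    (hdom : edom g ⊆ edom f) (hne : (edom g).Nonempty) :
    s ∈ argminSet f g ↔
      s ∈ edom g ∧ IsMinOn (fun y => (f y).toReal + (g y).toReal) (edom g) s := by
  have hcoe {y : T} (hy : y ∈ edom g) := coe_toReal_add_toReal hf hg hdom hy
  have htop {y : T} (hy : y ∉ edom g) : f y + g y = ⊤ := by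
    have hgy : g y = ⊤ := not_lt_top_iff.1 hy
    rw [hgy, EReal.add_top_of_ne_bot (hf y).ne']
  constructor
  · intro hs
    have hmem : s ∈ edom g := by
      obtain ⟨y, hy⟩ := hne
      by_contra hns
      have hle := hs y
      rw [htop hns, ← hcoe hy] at hle
      exact (EReal.coe_lt_top _).not_ge hle
    refine ⟨hmem, fun y hy => EReal.coe_le_coe_iff.1 ?_⟩
    rw [hcoe hmem, hcoe hy]
    exact hs y
  · rintro ⟨hmem, hmin⟩ y
    by_cases hy : y ∈ edom g
    · rw [← hcoe hmem, ← hcoe hy]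
      exact EReal.coe_le_coe_iff.2 (hmin hy)
    · exact le_top.trans_eq (htop hy).symm

theorem iInf_add_eq_of_mem_argminSet {f g : T → EReal} {s : T} (hs : s ∈ argminSet f g) :
    ⨅ y, f y + g y = f s + g s :=
  le_antisymm (iInf_le _ s) (le_iInf hs)

theorem mem_edom_and_le_of_tendsto_toWeakSpace {l : Filter ι} [NeBot l] {φ : E → ℝ}
    {f' : E → E} {u : ι → E} {m : ℝ} (hg : ProperLscConvex g)
    (hsub : IsSubgradientOn (edom g) φ f') (hu : ∀ k, u k ∈ edom g)
    (hup : Tendsto (fun k => toWeakSpace ℝ E (u k)) l (𝓝 (toWeakSpace ℝ E p)))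
    (hm : Tendsto (fun k => φ (u k) + (g (u k)).toReal) l (𝓝 m)) :
    p ∈ edom g ∧ φ p + (g p).toReal ≤ m := by
  -- The affine minorant of `φ` at `s` is weakly continuous, and it is exact at `p` once `s = p`.
  have hle : ∀ s ∈ edom g, g p ≤ ((m - (φ s + (⟪p, f' s⟫ - ⟪s, f' s⟫)) : ℝ) : EReal) := by
    intro s hs
    have hinner : Tendsto (fun k => ⟪u k, f' s⟫) l (𝓝 ⟪p, f' s⟫) :=
      ((continuous_inner_toWeakSpace_symm (f' s)).tendsto _).comp hup
    have hbound := hm.sub ((hinner.sub_const ⟪s, f' s⟫).const_add (φ s))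
    have hlsc := lowerSemicontinuous_comp_toWeakSpace_symm hg.2.2.1 hg.quasiconvexOn
    refine le_of_lowerSemicontinuousAt_of_tendsto (T := WeakSpace ℝ E) (hlsc _) hup
      ((continuous_coe_real_ereal.tendsto _).comp hbound) fun k => ?_
    have hgrad := hsub hs (hu k)
    rw [real_inner_comm, inner_sub_left] at hgrad
    refine (hg.coe_toReal (hu k)).symm.trans_le (EReal.coe_le_coe_iff.2 ?_)
    linarith
  have hp : p ∈ edom g := by
    obtain ⟨s, hs⟩ := hg.1
    exact (hle s hs).trans_lt (EReal.coe_lt_top _)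
  have hreal := hle p hp
  rw [← hg.coe_toReal hp, sub_self, add_zero, EReal.coe_le_coe_iff] at hreal
  exact ⟨hp, by linarith⟩

theorem LS1Step.pos {f' : Y → Y} {J : Y → ℝ → Y} {x : Y}
    (h : LS1Step f' J δ σ θ x α) (hσ : 0 < σ) (hθ : 0 < θ) : 0 < α := by
  obtain ⟨n, rfl, -⟩ := h
  positivity

theorem LS1Step.eq_or_not_LS1_div {f' : Y → Y} {J : Y → ℝ → Y} {x : Y}
    (h : LS1Step f' J δ σ θ x α) (hθ : θ ≠ 0) :
    α = σ ∨ ¬ LS1 f' J δ x (α / θ) := by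
  obtain ⟨n, rfl, -, hrej⟩ := h
  rcases n with - | n
  · exact .inl (by rw [pow_zero, mul_one])
  · rw [pow_succ, ← mul_assoc, mul_div_cancel_right₀ _ hθ]
    exact .inr (hrej n n.lt_succ_self)

theorem isFBRun_of_LS1Step {f' : E → E} {J : E → ℝ → E} {x : ℕ → E} {a : ℕ → ℝ}
    (hg : ProperLscConvex g)
    (hJ : ∀ u ∈ edom g, ∀ α : ℝ, 0 < α → IsProxPt g α (u - α • f' u) (J u α))
    (hσ : 0 < σ) (hθ : 0 < θ) (hx0 : x 0 ∈ edom g)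
    (hls : ∀ k, LS1Step f' J δ σ θ (x k) (a k)) (hiter : ∀ k, x (k + 1) = J (x k) (a k)) :
    IsFBRun (edom g) (fun y => (g y).toReal) f' σ θ δ x (fun k => J (x k) (a k / θ)) a := by
  have hpos : ∀ k, 0 < a k := fun k => (hls k).pos hσ hθ
  have hmem : ∀ k, x k ∈ edom g := by
    intro k
    induction k with
    | zero => exact hx0
    | succ k ih => exact hiter k ▸ (hJ _ ih _ (hpos k)).mem_edom hg
  have hVI : ∀ k β, 0 < β →
      ProxVI (edom g) (fun y => (g y).toReal) β (x k - β • f' (x k)) (J (x k) β) :=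
    fun k β hβ => (hJ _ (hmem k) β hβ).proxVI hg hβ
  exact
    { mem := hmem
      stepsize_pos := hpos
      step := fun k => hiter k ▸ hVI k _ (hpos k)
      accepted := fun k => by
        obtain ⟨n, -, hacc, -⟩ := hls k
        rw [hiter k]
        exact hacc
      trial := fun k => hVI k _ (div_pos (hpos k) hθ)
      rejected := fun k => ((hls k).eq_or_not_LS1_div hθ.ne').imp_right not_le.1 }

end ExtendedReal

theorem stmt6_general (f g : H → EReal) (f' : H → H) (hf : ∀ y, ⊥ < f y) (hg : ProperLscConvex g)
    (hdom : edom g ⊆ edom f) (hsub : IsSubgradientOn (edom g) (fun y => (f y).toReal) f')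
    (hUC : ∀ A ⊆ edom g, IsBounded A → UniformContinuousOn f' A) (J : H → ℝ → H)
    (hJ : ∀ u ∈ edom g, ∀ α : ℝ, 0 < α → IsProxPt g α (u - α • f' u) (J u α))
    (σ θ δ : ℝ) (hσ : 0 < σ) (hθ : θ ∈ Ioo (0 : ℝ) 1) (hδ : δ ∈ Ioo (0 : ℝ) (1 / 2))
    (x : ℕ → H) (a : ℕ → ℝ) (hx0 : x 0 ∈ edom g)
    (hls : ∀ k, LS1Step f' J δ σ θ (x k) (a k)) (hiter : ∀ k, x (k + 1) = J (x k) (a k))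
    (hS : (argminSet f g).Nonempty) :
    ∃ p ∈ argminSet f g,
      (∀ y : H, Tendsto (fun k => ⟪x k, y⟫) atTop (𝓝 ⟪p, y⟫)) ∧
        Tendsto (fun k => f (x k) + g (x k)) atTop (𝓝 (⨅ y, f y + g y)) := by
  have hrun := isFBRun_of_LS1Step hg hJ hσ hθ.1 hx0 hls hiter
  have hargmin {s : H} := mem_argminSet_iff (s := s) hf hg.2.1 hdom hg.1
  have hvalue : ∀ s ∈ argminSet f g, Tendsto (fun k => (f (x k)).toReal + (g (x k)).toReal) atTop
      (𝓝 ((f s).toReal + (g s).toReal)) := fun s hs =>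
    hrun.tendsto_value hsub hUC hσ hθ hδ (hargmin.1 hs).1 (hargmin.1 hs).2
  have hcluster : ∀ p, MapClusterPt (toWeakSpace ℝ H p) atTop (fun k => toWeakSpace ℝ H (x k)) →
      p ∈ argminSet f g := by
    intro p hp
    obtain ⟨s, hs⟩ := hS
    obtain ⟨U, hU, hUp⟩ := mapClusterPt_iff_ultrafilter.1 hp
    obtain ⟨hmem, hle⟩ := mem_edom_and_le_of_tendsto_toWeakSpace hg hsub hrun.mem hUp
      ((hvalue s hs).mono_left hU)
    exact hargmin.2 ⟨hmem, fun y hy => hle.trans ((hargmin.1 hs).2 hy)⟩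
  obtain ⟨p, hp, hxp⟩ := exists_tendsto_toWeakSpace_of_opial hS
    (fun s hs => hrun.exists_tendsto_norm_sub hsub hδ.2.le (hargmin.1 hs).1 (hargmin.1 hs).2)
    hcluster
  refine ⟨p, hp, fun y => ((continuous_inner_toWeakSpace_symm y).tendsto _).comp hxp, ?_⟩
  have hcoe := (continuous_coe_real_ereal.tendsto _).comp (hvalue p hp)
  simpa only [Function.comp_def, coe_toReal_add_toReal hf hg.2.1 hdom (hrun.mem _),
    coe_toReal_add_toReal hf hg.2.1 hdom (hargmin.1 hp).1, iInf_add_eq_of_mem_argminSet hp]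
    using hcoe

/-- Theorem 4.1(i): under Assumptions A1–A2, if `S⁎ ≠ ∅` then the
sequence generated by Method 1 (forward-backward with Linesearch 1) converges weakly
to a point of `S⁎`, and `(f+g)(xᵏ) → min (f+g)`. -/
theorem stmt6
    (f g : H → EReal) (f' : H → H) (prox : ℝ → H → H)
    (hf : ProperLscConvex f) (hg : ProperLscConvex g)
    (hdom : edom g ⊆ edom f)
    (hdiff : GradOnOpenSupset f f' (edom g))
    (hA2 : UCBddOnBounded g f')
    (hprox : ∀ α : ℝ, 0 < α → ∀ z : H, IsProxPt g α z (prox α z))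
    (J : H → ℝ → H) (hJ : ∀ (x : H) (α : ℝ), J x α = prox α (x - α • f' x))
    (σ θ δ : ℝ) (hσ : 0 < σ) (hθ : θ ∈ Set.Ioo (0 : ℝ) 1)
    (hδ : δ ∈ Set.Ioo (0 : ℝ) (1 / 2))
    (x : ℕ → H) (a : ℕ → ℝ)
    (hx0 : x 0 ∈ edom g)
    (hls : ∀ k : ℕ, LS1Step f' J δ σ θ (x k) (a k))
    (hiter : ∀ k : ℕ, x (k + 1) = J (x k) (a k))
    (hS : (argminSet f g).Nonempty) :
    ∃ p ∈ argminSet f g,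
      (∀ y : H, Tendsto (fun k => ⟪x k, y⟫) atTop (nhds ⟪p, y⟫)) ∧
        Tendsto (fun k => f (x k) + g (x k)) atTop (nhds (⨅ y, f y + g y)) :=
  stmt6_general f g f' hf.2.1 hg hdom (hdiff.isSubgradientOn hf hg.convex_edom hdom)
    (fun A hA hA' => (hA2 A hA hA').1) J (fun u _ α hα => hJ u α ▸ hprox α hα _) σ θ δ hσ hθ hδ x a
    hx0 hls hiter hS
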